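/- Let R be the reflection of ℝ² about the line through the origin making angle φ with the first coordinate axis (under the identification ℝ² ≅ ℂ, Rw = e^{2iφ}·conj(w)), let z = e^{iθ} be a unit vector and P the orthogonal projection onto the orthogonal complement of z. If z is not an eigenvector of R (i.e., φ − θ is not a multiple of π/2), then ∑_{n=0}^∞ ‖(PR)^n z‖² = 2; if z is an eigenvector of R then the sum equals 1. -/

import Mathlib

/-!
Complete `z` to an orthonormal basis `(z, u)` of the plane. Then `P R w = ⟪R⁻¹ u, w⟫ u` has rank
one, so `(P R)ⁿ⁺¹ z = ⟪R⁻¹ u, z⟫ ⟪R⁻¹ u, u⟫ⁿ u` and the squared norms from `n = 1` on form a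
geometric series. As `R⁻¹ u` is a unit vector, its coordinates satisfy
`|⟪R⁻¹ u, z⟫|² + |⟪R⁻¹ u, u⟫|² = 1`, so this series sums to `1` if `⟪R⁻¹ u, z⟫ ≠ 0`. Otherwise all
its terms vanish, which happens exactly when `z` is an eigenvector of `R`.
-/

open Module
open scoped InnerProductSpace

section RankOne

theorem iterate_succ_smulRight_apply {R M : Type*} [CommSemiring R] [AddCommMonoid M] [Module R M]
    (f : M →ₗ[R] R) (u z : M) (n : ℕ) :
    (f.smulRight u)^[n + 1] z = (f z * f u ^ n) • u := by
  induction n with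
  | zero => simp
  | succ n ih =>
    rw [Function.iterate_succ_apply', ih, LinearMap.smulRight_apply, map_smul, smul_eq_mul,
      pow_succ, mul_assoc]

variable {𝕜 E : Type*} [NormedField 𝕜] [SeminormedAddCommGroup E] [NormedSpace 𝕜 E]

theorem norm_sq_iterate_succ_smulRight_apply (f : E →ₗ[𝕜] 𝕜) (u z : E) (n : ℕ) :
    ‖(f.smulRight u)^[n + 1] z‖ ^ 2 = ‖f z‖ ^ 2 * ‖u‖ ^ 2 * (‖f u‖ ^ 2) ^ n := by
  rw [iterate_succ_smulRight_apply, norm_smul, norm_mul, norm_pow]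
  ring

theorem hasSum_norm_sq_iterate_smulRight (f : E →ₗ[𝕜] 𝕜) {u : E} (hu : ‖f u‖ < 1) (z : E) :
    HasSum (fun n : ℕ ↦ ‖(f.smulRight u)^[n] z‖ ^ 2)
      (‖z‖ ^ 2 + ‖f z‖ ^ 2 * ‖u‖ ^ 2 / (1 - ‖f u‖ ^ 2)) := by
  have hratio : ‖f u‖ ^ 2 < 1 := pow_lt_one₀ (norm_nonneg _) hu two_ne_zero
  refine HasSum.zero_add (f := fun n : ℕ ↦ ‖(f.smulRight u)^[n] z‖ ^ 2) ?_
  simp only [norm_sq_iterate_succ_smulRight_apply, div_eq_mul_inv]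
  exact (hasSum_geometric_of_lt_one (sq_nonneg _) hratio).mul_left _

theorem hasSum_norm_sq_iterate_smulRight_of_apply_eq_zero (f : E →ₗ[𝕜] 𝕜) (u : E) {z : E}
    (hz : f z = 0) :
    HasSum (fun n : ℕ ↦ ‖(f.smulRight u)^[n] z‖ ^ 2) (‖z‖ ^ 2) := by
  refine hasSum_single 0 fun n hn ↦ ?_
  obtain ⟨n, rfl⟩ := Nat.exists_eq_succ_of_ne_zero hn
  rw [norm_sq_iterate_succ_smulRight_apply, hz, norm_zero, zero_pow two_ne_zero, zero_mul, zero_mul]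

end RankOne

section Plane

variable {𝕜 E : Type*} [RCLike 𝕜] [NormedAddCommGroup E] [InnerProductSpace 𝕜 E]

theorem exists_orthonormalBasis_apply_eq {ι : Type*} [Fintype ι]
    (hE : finrank 𝕜 E = Fintype.card ι) (i : ι) {z : E} (hz : ‖z‖ = 1) :
    ∃ b : OrthonormalBasis ι 𝕜 E, b i = z := by
  have : FiniteDimensional 𝕜 E := .of_finrank_pos (hE ▸ Fintype.card_pos_iff.mpr ⟨i⟩)
  have hfamily : Orthonormal 𝕜 (({i} : Set ι).domRestrict fun _ ↦ z) :=
    ⟨fun _ ↦ hz, fun j k hjk ↦ (hjk (Subsingleton.elim j k)).elim⟩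
  obtain ⟨b, hb⟩ := hfamily.exists_orthonormalBasis_extension_of_card_eq hE
  exact ⟨b, hb i rfl⟩

theorem starProjection_orthogonal_span_basis_zero (b : OrthonormalBasis (Fin 2) 𝕜 E) (w : E) :
    (𝕜 ∙ b 0)ᗮ.starProjection w = ⟪b 1, w⟫_𝕜 • b 1 := by
  rw [Submodule.starProjection_orthogonal_val,
    Submodule.starProjection_unit_singleton 𝕜 (b.norm_eq_one 0),
    sub_eq_iff_eq_add', ← Fin.sum_univ_two fun i ↦ ⟪b i, w⟫_𝕜 • b i, b.sum_repr']

theorem mem_span_basis_zero_iff (b : OrthonormalBasis (Fin 2) 𝕜 E) (w : E) :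
    w ∈ 𝕜 ∙ b 0 ↔ ⟪b 1, w⟫_𝕜 = 0 := by
  rw [← Submodule.orthogonal_orthogonal (𝕜 ∙ b 0), ← Submodule.starProjection_apply_eq_zero_iff,
    starProjection_orthogonal_span_basis_zero, smul_eq_zero_iff_left (b.orthonormal.ne_zero 1)]

theorem starProjection_orthogonal_comp_eq_smulRight (b : OrthonormalBasis (Fin 2) 𝕜 E)
    (R : E ≃ₗᵢ[𝕜] E) :
    (𝕜 ∙ b 0)ᗮ.starProjection ∘ R = (innerₛₗ 𝕜 (R.symm (b 1))).smulRight (b 1) := by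
  ext w
  rw [Function.comp_apply, starProjection_orthogonal_span_basis_zero, LinearMap.smulRight_apply,
    innerₛₗ_apply_apply, R.symm.inner_map_eq_flip, R.symm_symm]

theorem sum_sq_norms_iterates_reflection_general (hE : finrank 𝕜 E = 2) (R : E ≃ₗᵢ[𝕜] E) {z : E}
    (hz : ‖z‖ = 1) :
    (R z ∉ 𝕜 ∙ z → HasSum (fun n : ℕ ↦ ‖((𝕜 ∙ z)ᗮ.starProjection ∘ R)^[n] z‖ ^ 2) 2) ∧
      (R z ∈ 𝕜 ∙ z → HasSum (fun n : ℕ ↦ ‖((𝕜 ∙ z)ᗮ.starProjection ∘ R)^[n] z‖ ^ 2) 1) := by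
  obtain ⟨b, rfl⟩ :=
    exists_orthonormalBasis_apply_eq (hE.trans (Fintype.card_fin 2).symm) (0 : Fin 2) hz
  set f := innerₛₗ 𝕜 (R.symm (b 1)) with hf
  have hmem : R (b 0) ∈ 𝕜 ∙ b 0 ↔ f (b 0) = 0 := by
    rw [mem_span_basis_zero_iff, hf, innerₛₗ_apply_apply, R.symm.inner_map_eq_flip, R.symm_symm]
  have hunit : ‖f (b 0)‖ ^ 2 + ‖f (b 1)‖ ^ 2 = 1 := by
    simpa [Fin.sum_univ_two, hf] using b.sum_sq_norm_inner_left (R.symm (b 1))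
  rw [starProjection_orthogonal_comp_eq_smulRight, hmem, ← hf]
  refine ⟨fun hne ↦ ?_, fun h0 ↦ ?_⟩
  · have hpos : 0 < ‖f (b 0)‖ ^ 2 := by positivity
    have hlt : ‖f (b 1)‖ < 1 := by nlinarith [norm_nonneg (f (b 1))]
    convert hasSum_norm_sq_iterate_smulRight f hlt (b 0) using 1
    rw [← eq_sub_iff_add_eq.mpr hunit, b.norm_eq_one, b.norm_eq_one, one_pow, mul_one,
      div_self hpos.ne', one_add_one_eq_two]
  · simpa [hz] using hasSum_norm_sq_iterate_smulRight_of_apply_eq_zero f (b 1) h0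

end Plane

section Complex

open ComplexConjugate

theorem starProjection_orthogonal_span_singleton_complex {z : ℂ} (hz : ‖z‖ = 1) (w : ℂ) :
    (ℝ ∙ z)ᗮ.starProjection w = w - (conj z * w).re • z := by
  rw [Submodule.starProjection_orthogonal_val, Submodule.starProjection_unit_singleton ℝ hz,
    Complex.inner, mul_comm]

theorem reflection_span_singleton_complex {u : ℂ} (hu : ‖u‖ = 1) (w : ℂ) :
    (ℝ ∙ u).reflection w = u ^ 2 * conj w := by
  have hconj : u * conj u = 1 := by simp [Complex.mul_conj', hu]
  have hre : (2 * (w * conj u).re : ℂ) = w * conj u + conj w * u := by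
    simpa using (Complex.add_conj (w * conj u)).symm
  rw [Submodule.reflection_apply, Submodule.starProjection_unit_singleton ℝ hu, Complex.inner,
    nsmul_eq_mul, Complex.real_smul]
  push_cast
  linear_combination u * hre + w * hconj

theorem reflection_span_exp_mul_I (φ : ℝ) (w : ℂ) :
    (ℝ ∙ Complex.exp (φ * Complex.I)).reflection w =
      Complex.exp (2 * φ * Complex.I) * conj w := by
  rw [reflection_span_singleton_complex (Complex.norm_exp_ofReal_mul_I φ), ← Complex.exp_nat_mul,
    Nat.cast_ofNat, mul_assoc]

theorem mul_mem_span_singleton_complex_iff (a : ℂ) {z : ℂ} (hz : z ≠ 0) :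
    a * z ∈ ℝ ∙ z ↔ a.im = 0 := by
  simp only [Submodule.mem_span_singleton, Complex.real_smul, mul_left_inj' hz]
  exact ⟨fun ⟨r, hr⟩ ↦ hr ▸ Complex.ofReal_im r, fun h ↦ ⟨a.re, Complex.ext rfl h.symm⟩⟩

theorem reflection_exp_mul_I_mem_span_iff (φ θ : ℝ) :
    (ℝ ∙ Complex.exp (φ * Complex.I)).reflection (Complex.exp (θ * Complex.I)) ∈
        ℝ ∙ Complex.exp (θ * Complex.I) ↔
      ∃ m : ℤ, φ - θ = m * (Real.pi / 2) := by
  have hrot : (ℝ ∙ Complex.exp (φ * Complex.I)).reflection (Complex.exp (θ * Complex.I)) =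
      Complex.exp ((2 * (φ - θ) : ℝ) * Complex.I) * Complex.exp (θ * Complex.I) := by
    rw [reflection_span_exp_mul_I, ← Complex.exp_conj, ← Complex.exp_add, ← Complex.exp_add]
    simp only [map_mul, Complex.conj_ofReal, Complex.conj_I]
    push_cast
    ring_nf
  rw [hrot, mul_mem_span_singleton_complex_iff _ (Complex.exp_ne_zero _),
    Complex.exp_ofReal_mul_I_im, Real.sin_eq_zero_iff]
  refine exists_congr fun m ↦ ⟨fun h ↦ ?_, fun h ↦ ?_⟩ <;> linarith

end Complex

/-- Identify `ℝ²` with `ℂ`. Let `R` be the reflection about the line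
through the origin at angle `φ` (`Rw = e^{2iφ} w̄`), `z = e^{iθ}` a unit vector, and
`P w = w − ⟨z,w⟩_ℝ z`. If `z` is not an eigenvector of `R` (i.e. `φ − θ` is not a multiple
of `π/2`), then `∑_n ‖(P∘R)^n z‖² = 2`; if it is, the sum equals `1`. -/
theorem sum_sq_norms_iterates_reflection (φ θ : ℝ) (z : ℂ)
    (hzdef : z = Complex.exp (θ * Complex.I))
    (R P : ℂ → ℂ)
    (hR : ∀ w, R w = Complex.exp (2 * φ * Complex.I) * (starRingEnd ℂ) w)
    (hP : ∀ w, P w = w - ((starRingEnd ℂ) z * w).re • z) :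
    ((¬ ∃ m : ℤ, φ - θ = m * (Real.pi / 2)) → ∑' n : ℕ, ‖(P ∘ R)^[n] z‖ ^ 2 = 2)
    ∧ ((∃ m : ℤ, φ - θ = m * (Real.pi / 2)) → ∑' n : ℕ, ‖(P ∘ R)^[n] z‖ ^ 2 = 1) := by
  have hz : ‖z‖ = 1 := hzdef ▸ Complex.norm_exp_ofReal_mul_I θ
  obtain rfl : R = (ℝ ∙ Complex.exp (φ * Complex.I)).reflection :=
    funext fun w ↦ (hR w).trans (reflection_span_exp_mul_I φ w).symm
  obtain rfl : P = (ℝ ∙ z)ᗮ.starProjection :=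
    funext fun w ↦ (hP w).trans (starProjection_orthogonal_span_singleton_complex hz w).symm
  have hsum := sum_sq_norms_iterates_reflection_general Complex.finrank_real_complex
    (ℝ ∙ Complex.exp (φ * Complex.I)).reflection hz
  rw [← reflection_exp_mul_I_mem_span_iff, ← hzdef]
  exact ⟨fun h ↦ (hsum.1 h).tsum_eq, fun h ↦ (hsum.2 h).tsum_eq⟩
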